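/- Occlusion lemma. Let I ⊆ {1,…,K} be nonempty and let i ∈ I be occluded by I, meaning that for every level k ∈ {1,…,n_00} with i ∈ U_k one has U_k ∩ (I \ {i}) ≠ ∅. Then f_free(I) + Σ_{k=1}^{n_00} f_k(I) = f_free(I \ {i}) + Σ_{k=1}^{n_00} f_k(I \ {i}) + n_ii (where for the empty set f_free(∅) = 0 and f_k(∅) = 1, so the value for ∅ is n_00). Consequently, if a point r ∈ C̄ satisfies the sum-rate constraint on I with equality, then it satisfies the sum-rate constraint on I \ {i} with equality and moreover r_i = n_ii. -/

import Mathlib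

open Finset

/-- The set `U_k` of users (indices `i ≠ 0`) potentially causing interference at
receiver 0 on level `k`:  `n_{0i} - n_{ii} < k ≤ n_{0i}`. -/
def Uset (K : ℕ) (nd nc : Fin (K + 1) → ℕ) (k : ℕ) : Finset (Fin (K + 1)) :=
  Finset.univ.filter fun i => i ≠ 0 ∧ (nc i : ℤ) - (nd i : ℤ) < (k : ℤ) ∧ (k : ℤ) ≤ (nc i : ℤ)

/-- `f_free(i) = (n_{ii} - n_{0i})⁺ + (n_{0i} - n_{00})⁺`. -/
def ffree (K : ℕ) (nd nc : Fin (K + 1) → ℕ) (i : Fin (K + 1)) : ℕ :=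
  (nd i - nc i) + (nc i - nd 0)

/-- `f_free(S) + ∑_{k=1}^{n_{00}} f_k(S)` where `f_k(S) = max(|U_k ∩ S|, 1)`; for `S = ∅`
this value is `n_{00}`. -/
def sumBound (K : ℕ) (nd nc : Fin (K + 1) → ℕ) (S : Finset (Fin (K + 1))) : ℕ :=
  (∑ i ∈ S, ffree K nd nc i) +
    ∑ k ∈ Finset.Icc 1 (nd 0), max ((Uset K nd nc k ∩ S).card) 1

/-- The outer-bound polytope `C̄`. -/
def outerRegion (K : ℕ) (nd nc : Fin (K + 1) → ℕ) : Set (Fin (K + 1) → ℝ) :=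
  {r | (∀ i, 0 ≤ r i ∧ r i ≤ (nd i : ℝ)) ∧
    ∀ S : Finset (Fin (K + 1)), 0 ∉ S → S.Nonempty →
      r 0 + ∑ i ∈ S, r i ≤ (sumBound K nd nc S : ℝ)}

/-!
Removing `i` from `I` lowers the level count `f_k` by one precisely at the levels where `i` meets
another user of `I`. When `i` is occluded these are all of its interference levels, and by
regularity those levels together with the free levels of `i` number exactly `n_ii`. The sum-rate
constraint on `I` is then the sum of the one on `I \ {i}` and the box constraint `r_i ≤ n_ii`, so
equality in the sum forces equality in both summands.
-/

lemma max_card_one_eq_max_card_erase_one_add {α : Type*} [DecidableEq α] (s : Finset α) (a : α) :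
    max #s 1 = max #(s.erase a) 1 + if a ∈ s ∧ (s.erase a).Nonempty then 1 else 0 := by
  by_cases ha : a ∈ s
  · have hcard := card_erase_add_one ha
    simp only [ha, true_and, ← card_pos]
    split_ifs <;> omega
  · simp [ha]

section

variable {K : ℕ} {nd nc : Fin (K + 1) → ℕ} {i : Fin (K + 1)}

/-- The levels of receiver 0 at which user `i` interferes, that is, the `k ∈ {1, …, n_00}` with
`i ∈ U_k`. -/
def interferenceLevels (K : ℕ) (nd nc : Fin (K + 1) → ℕ) (i : Fin (K + 1)) : Finset ℕ :=
  {k ∈ Icc 1 (nd 0) | i ∈ Uset K nd nc k}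

lemma interferenceLevels_eq_Icc (hi0 : i ≠ 0) :
    interferenceLevels K nd nc i = Icc (nc i - nd i + 1) (min (nc i) (nd 0)) := by
  ext k
  simp only [interferenceLevels, Uset, mem_filter, mem_Icc, mem_univ, true_and, ne_eq, hi0,
    not_false_eq_true]
  omega

lemma ffree_add_card_interferenceLevels (hi0 : i ≠ 0) (hreg : nc i ≤ nd 0 + nd i) :
    ffree K nd nc i + #(interferenceLevels K nd nc i) = nd i := by
  rw [interferenceLevels_eq_Icc hi0, Nat.card_Icc, ffree]
  omega

lemma sumBound_eq_sumBound_erase_add {I : Finset (Fin (K + 1))} (hi : i ∈ I) :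
    sumBound K nd nc I = sumBound K nd nc (I.erase i) + (ffree K nd nc i +
      #{k ∈ interferenceLevels K nd nc i | (Uset K nd nc k ∩ I.erase i).Nonempty}) := by
  have hlevel (k : ℕ) : max #(Uset K nd nc k ∩ I) 1 = max #(Uset K nd nc k ∩ I.erase i) 1 +
      if i ∈ Uset K nd nc k ∧ (Uset K nd nc k ∩ I.erase i).Nonempty then 1 else 0 := by
    simpa only [inter_erase, mem_inter, hi, and_true] using
      max_card_one_eq_max_card_erase_one_add (Uset K nd nc k ∩ I) i
  simp only [sumBound, interferenceLevels, hlevel, sum_add_distrib, ← sum_erase_add I _ hi,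
    filter_filter, card_filter]
  ac_rfl

lemma sumBound_eq_sumBound_erase_add_of_occluded {I : Finset (Fin (K + 1))} (hi0 : i ≠ 0)
    (hreg : nc i ≤ nd 0 + nd i) (hi : i ∈ I)
    (hocc : ∀ k ∈ interferenceLevels K nd nc i, (Uset K nd nc k ∩ I.erase i).Nonempty) :
    sumBound K nd nc I = sumBound K nd nc (I.erase i) + nd i := by
  rw [sumBound_eq_sumBound_erase_add hi, filter_true_of_mem hocc,
    ffree_add_card_interferenceLevels hi0 hreg]

lemma sumBound_empty : sumBound K nd nc ∅ = nd 0 := by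
  simp [sumBound]

lemma add_sum_le_sumBound {r : Fin (K + 1) → ℝ} (hr : r ∈ outerRegion K nd nc)
    {S : Finset (Fin (K + 1))} (hS : 0 ∉ S) :
    r 0 + ∑ j ∈ S, r j ≤ (sumBound K nd nc S : ℝ) := by
  obtain ⟨hbox, hsum⟩ := hr
  rcases S.eq_empty_or_nonempty with rfl | hne
  · simpa only [sum_empty, add_zero, sumBound_empty] using (hbox 0).2
  · exact hsum S hS hne

lemma tight_erase_of_tight {r : Fin (K + 1) → ℝ} (hr : r ∈ outerRegion K nd nc)
    {I : Finset (Fin (K + 1))} (hI : 0 ∉ I) (hi : i ∈ I)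
    (hbound : sumBound K nd nc I = sumBound K nd nc (I.erase i) + nd i)
    (htight : r 0 + ∑ j ∈ I, r j = (sumBound K nd nc I : ℝ)) :
    r 0 + ∑ j ∈ I.erase i, r j = (sumBound K nd nc (I.erase i) : ℝ) ∧ r i = (nd i : ℝ) := by
  have hle := add_sum_le_sumBound hr (fun h => hI (mem_of_mem_erase h) : 0 ∉ I.erase i)
  rw [← sum_erase_add I r hi, ← add_assoc, hbound, Nat.cast_add] at htight
  exact (add_eq_add_iff_eq_and_eq hle (hr.1 i).2).1 htight

theorem occlusion_general {I : Finset (Fin (K + 1))} (hreg : nc i ≤ nd 0 + nd i)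
    (hI0 : 0 ∉ I) (hi : i ∈ I)
    (hocc : ∀ k ∈ Icc 1 (nd 0), i ∈ Uset K nd nc k → (Uset K nd nc k ∩ I.erase i).Nonempty) :
    sumBound K nd nc I = sumBound K nd nc (I.erase i) + nd i ∧
    ∀ r ∈ outerRegion K nd nc,
      r 0 + ∑ j ∈ I, r j = (sumBound K nd nc I : ℝ) →
      (r 0 + ∑ j ∈ I.erase i, r j = (sumBound K nd nc (I.erase i) : ℝ) ∧
        r i = (nd i : ℝ)) := by
  have hbound : sumBound K nd nc I = sumBound K nd nc (I.erase i) + nd i :=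
    sumBound_eq_sumBound_erase_add_of_occluded (ne_of_mem_of_not_mem hi hI0) hreg hi fun k hk =>
      have ⟨hlevel, hmem⟩ := mem_filter.1 hk
      hocc k hlevel hmem
  exact ⟨hbound, fun _ hr htight => tight_erase_of_tight hr hI0 hi hbound htight⟩

end

/-- Occlusion lemma.  If `i ∈ I` is occluded by `I` — every level at which `i` interferes is
also occupied by another user of `I` — then the sum-rate bound satisfies
`f(I) = f(I \ {i}) + n_{ii}`; consequently any `r ∈ C̄` meeting the sum-rate constraint on `I`
with equality also meets the one on `I \ {i}` with equality, and `r_i = n_{ii}`. -/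
theorem occlusion (K : ℕ) (hK : 1 ≤ K) (nd nc : Fin (K + 1) → ℕ)
    (hreg : ∀ i : Fin (K + 1), i ≠ 0 → nc i ≤ nd 0 + nd i)
    (I : Finset (Fin (K + 1))) (hI0 : 0 ∉ I) (hIne : I.Nonempty)
    (i : Fin (K + 1)) (hi : i ∈ I)
    (hocc : ∀ k ∈ Finset.Icc 1 (nd 0), i ∈ Uset K nd nc k →
      (Uset K nd nc k ∩ I.erase i).Nonempty) :
    sumBound K nd nc I = sumBound K nd nc (I.erase i) + nd i ∧
    ∀ r ∈ outerRegion K nd nc,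
      r 0 + ∑ j ∈ I, r j = (sumBound K nd nc I : ℝ) →
      (r 0 + ∑ j ∈ I.erase i, r j = (sumBound K nd nc (I.erase i) : ℝ) ∧
        r i = (nd i : ℝ)) := by
  exact occlusion_general (hreg i (ne_of_mem_of_not_mem hi hI0)) hI0 hi hocc
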